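/- Let A be a nilpotent, finite-dimensional associative algebra over ℂ and let Z be a 1-dimensional ideal of A contained in Z(A) ∩ A'. Then dim M(A) + 1 ≤ dim M(A/Z) + 2·dim(A/A'). -/

import Mathlib

/-!
The inequality comes from counting cocycles and coboundaries separately.

Let `Z = ℂ z`. Since `z` is central, every cocycle `f` satisfies `f(z, xy) = f(zx, y) = 0` and
`f(xy, z) = f(x, yz) = 0`, so `f(z, ·)` and `f(·, z)` are functionals vanishing on `A'`. A cocycle
for which both functionals are zero descends to `A/Z`. Hence
`dim Z²(A) ≤ dim Z²(A/Z) + 2 dim(A/A')` (`finrank_cocycles_le`).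

The coboundaries of `A/Z` pull back injectively to coboundaries of `A`. A functional `g` with
`g(z) ≠ 0` gives a coboundary that is not such a pullback, because `z ∈ A'`. Hence
`dim B²(A/Z) + 1 ≤ dim B²(A)` (`finrank_coboundaries_lt`). Subtracting gives the claim.
-/

open Module

noncomputable section Defs

variable (A : Type*) [NonUnitalRing A] [Module ℂ A]

/-- `A` is nilpotent: there is an `n` such that every product of `n` elements of `A`
is zero (by associativity it suffices to consider left-normed products). -/
def IsNilpotentAlgebra : Prop :=
  ∃ n : ℕ, ∀ (x : A) (l : List A), l.length + 1 = n → l.foldl (· * ·) x = 0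

/-- The derived ideal `A' = AA`: the linear span of all products in `A`. -/
def derivedIdeal : Submodule ℂ A :=
  Submodule.span ℂ {a : A | ∃ x y : A, x * y = a}

/-- The space of 2-cocycles: bilinear maps `f : A × A → ℂ` with `f(xy,z) = f(x,yz)`. -/
def Cocycles : Submodule ℂ (A →ₗ[ℂ] A →ₗ[ℂ] ℂ) where
  carrier := {f | ∀ x y z : A, f (x * y) z = f x (y * z)}
  add_mem' := by
    intro f g hf hg x y z
    simp [hf x y z, hg x y z]
  zero_mem' := by
    intro x y z
    simp
  smul_mem' := by
    intro c f hf x y z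
    simp [hf x y z]

/-- The space of 2-coboundaries: bilinear maps of the form `f(x,y) = g(xy)`. -/
def Coboundaries : Submodule ℂ (A →ₗ[ℂ] A →ₗ[ℂ] ℂ) where
  carrier := {f | ∃ g : A →ₗ[ℂ] ℂ, ∀ x y : A, f x y = g (x * y)}
  add_mem' := by
    rintro f₁ f₂ ⟨g₁, h₁⟩ ⟨g₂, h₂⟩
    exact ⟨g₁ + g₂, fun x y => by simp [h₁ x y, h₂ x y]⟩
  zero_mem' := ⟨0, by simp⟩
  smul_mem' := by
    rintro c f ⟨g, h⟩
    exact ⟨c • g, fun x y => by simp [h x y]⟩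

/-- The dimension of the multiplier `M(A) = H²(A, ℂ)`, the quotient of the cocycles
by the coboundaries. -/
def multDim : ℕ :=
  Module.finrank ℂ ((Cocycles A).map (Coboundaries A).mkQ)

/-- `t(A) = (dim A)² - dim M(A)`. -/
def tInv : ℤ :=
  (Module.finrank ℂ A : ℤ) ^ 2 - (multDim A : ℤ)

/-- A (two-sided) ideal of `A`. -/
def IsIdealOf (I : Submodule ℂ A) : Prop :=
  ∀ a : A, ∀ x ∈ I, a * x ∈ I ∧ x * a ∈ I

/-- `A ≅ J₁ ⊕ A(k)`: `A` has a basis `x, z, a₁, …, a_k` whose only nonzero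
product of basis vectors is `x·x = z`. -/
def IsJ1SumAbelian (k : ℕ) : Prop :=
  ∃ b : Basis (Fin (k + 2)) ℂ A,
    b 0 * b 0 = b 1 ∧ ∀ i j : Fin (k + 2), ¬(i = 0 ∧ j = 0) → b i * b j = 0

/-- `A ≅ J₁`: `A` has a basis `x, z` with only nonzero product `x·x = z`. -/
def IsJ1 : Prop := IsJ1SumAbelian A 0

/-- `A ≅ C₃`: `A` has a basis `x, z, z'` with only nonzero products
`x·x = z`, `x·z = z·x = z'`. -/
def IsC3 : Prop :=
  ∃ b : Basis (Fin 3) ℂ A,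
    b 0 * b 0 = b 1 ∧ b 0 * b 1 = b 2 ∧ b 1 * b 0 = b 2 ∧
    b 0 * b 2 = 0 ∧ b 2 * b 0 = 0 ∧ b 1 * b 1 = 0 ∧ b 1 * b 2 = 0 ∧
    b 2 * b 1 = 0 ∧ b 2 * b 2 = 0

variable [SMulCommClass ℂ A A] [IsScalarTower ℂ A A]

/-- The center `Z(A) = {z : za = az = 0 for all a}`. -/
def centerSub : Submodule ℂ A where
  carrier := {z | ∀ a : A, z * a = 0 ∧ a * z = 0}
  add_mem' := by
    intro x y hx hy a
    constructor
    · rw [add_mul, (hx a).1, (hy a).1, add_zero]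
    · rw [mul_add, (hx a).2, (hy a).2, add_zero]
  zero_mem' := by
    intro a
    simp
  smul_mem' := by
    intro c x hx a
    constructor
    · rw [smul_mul_assoc, (hx a).1, smul_zero]
    · rw [mul_smul_comm, (hx a).2, smul_zero]

/-- `A` is extra special: `Z(A) = A'` and `dim Z(A) = 1`. -/
def IsExtraSpecialAlg : Prop :=
  centerSub A = derivedIdeal A ∧ Module.finrank ℂ (centerSub A) = 1

/-- `A ≅ E ⊕ A(k)` for some extra special algebra `E` of dimension `n`:
`A` decomposes as an internal direct sum of a subalgebra `E` which is extra special
of dimension `n` and a central subspace `Z` of dimension `k` all of whose products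
with `A` vanish. -/
def HasExtraSpecialDecomp (n k : ℕ) : Prop :=
  ∃ (E : NonUnitalSubalgebra ℂ A) (Z : Submodule ℂ A),
    IsCompl E.toSubmodule Z ∧ (∀ z ∈ Z, ∀ a : A, z * a = 0 ∧ a * z = 0) ∧
    IsExtraSpecialAlg ↥E ∧ Module.finrank ℂ ↥E = n ∧ Module.finrank ℂ ↥Z = k

end Defs

lemma finrank_map_add_finrank_inf_ker {V W : Type*} [AddCommGroup V] [Module ℂ V]
    [AddCommGroup W] [Module ℂ W] [FiniteDimensional ℂ V] (f : V →ₗ[ℂ] W) (S : Submodule ℂ V) :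
    finrank ℂ (S.map f) + finrank ℂ (S ⊓ LinearMap.ker f : Submodule ℂ V) = finrank ℂ S := by
  rw [← LinearMap.finrank_range_add_finrank_ker (f.domRestrict S), LinearMap.range_domRestrict,
    LinearMap.ker_domRestrict, ← Submodule.map_comap_subtype,
    Submodule.finrank_map_subtype_eq]

/-- Pullback of bilinear forms along `π : A → H`, i.e. `h ↦ ((x, y) ↦ h (π x) (π y))`. -/
def bilinPullback {A H : Type*} [AddCommGroup A] [Module ℂ A] [AddCommGroup H] [Module ℂ H]
    (π : A →ₗ[ℂ] H) : (H →ₗ[ℂ] H →ₗ[ℂ] ℂ) →ₗ[ℂ] (A →ₗ[ℂ] A →ₗ[ℂ] ℂ) where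
  toFun h := h.compl₁₂ π π
  map_add' _ _ := rfl
  map_smul' _ _ := rfl

lemma bilinPullback_injective {A H : Type*} [AddCommGroup A] [Module ℂ A] [AddCommGroup H]
    [Module ℂ H] (π : A →ₗ[ℂ] H) (hsurj : Function.Surjective π) :
    Function.Injective (bilinPullback π) := by
  intro h₁ h₂ h
  ext a b
  obtain ⟨x, rfl⟩ := hsurj a
  obtain ⟨y, rfl⟩ := hsurj b
  exact LinearMap.congr_fun₂ h x y

/-- The two partial evaluations `f ↦ (f(z, ·), f(·, z))` of a bilinear form at `z`. -/
def partialEvals {A : Type*} [AddCommGroup A] [Module ℂ A] (z : A) :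
    (A →ₗ[ℂ] A →ₗ[ℂ] ℂ) →ₗ[ℂ] Dual ℂ A × Dual ℂ A where
  toFun f := (f z, f.flip z)
  map_add' _ _ := rfl
  map_smul' _ _ := rfl

lemma coboundaries_le_cocycles (A : Type*) [NonUnitalRing A] [Module ℂ A] :
    Coboundaries A ≤ Cocycles A := by
  rintro f ⟨g, hg⟩ x y z
  rw [hg, hg, mul_assoc]

lemma multDim_add_finrank_coboundaries (A : Type*) [NonUnitalRing A] [Module ℂ A]
    [FiniteDimensional ℂ A] :
    multDim A + finrank ℂ (Coboundaries A) = finrank ℂ (Cocycles A) := by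
  have h := finrank_map_add_finrank_inf_ker (Coboundaries A).mkQ (Cocycles A)
  rwa [Submodule.ker_mkQ, inf_eq_right.2 (coboundaries_le_cocycles A)] at h

/-- For a cocycle `f` and a central `z`, the functionals `f(z, ·)` and `f(·, z)` vanish on `A'`. -/
lemma map_partialEvals_cocycles_le {A : Type*} [NonUnitalRing A] [Module ℂ A] {z : A}
    (hz : ∀ a : A, z * a = 0 ∧ a * z = 0) :
    (Cocycles A).map (partialEvals z) ≤
      (derivedIdeal A).dualAnnihilator.prod (derivedIdeal A).dualAnnihilator := by
  rintro _ ⟨f, hf, rfl⟩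
  constructor
  · rw [SetLike.mem_coe, Submodule.mem_dualAnnihilator]
    intro w hw
    refine (Submodule.span_le (p := LinearMap.ker (f z))).2 ?_ hw
    rintro _ ⟨x, y, rfl⟩
    change f z (x * y) = 0
    rw [← hf z x y, (hz x).1, map_zero, LinearMap.zero_apply]
  · rw [SetLike.mem_coe, Submodule.mem_dualAnnihilator]
    intro w hw
    refine (Submodule.span_le (p := LinearMap.ker (f.flip z))).2 ?_ hw
    rintro _ ⟨x, y, rfl⟩
    change f (x * y) z = 0
    rw [hf x y z, (hz y).2, map_zero]

/-- A cocycle of `A` vanishing on `z` from both sides descends to the quotient by `ℂ z`. -/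
lemma cocycles_inf_ker_le {A H : Type*} [NonUnitalRing A] [Module ℂ A] [NonUnitalRing H]
    [Module ℂ H] {z : A} (π : A →ₗ[ℂ] H) (hmul : ∀ x y : A, π (x * y) = π x * π y)
    (hsurj : Function.Surjective π) (hker : LinearMap.ker π = ℂ ∙ z) :
    Cocycles A ⊓ LinearMap.ker (partialEvals z) ≤ (Cocycles H).map (bilinPullback π) := by
  rintro f ⟨hf, hf0⟩
  have hl : f z = 0 := congrArg Prod.fst hf0
  have hr : f.flip z = 0 := congrArg Prod.snd hf0
  obtain ⟨s, hs⟩ := π.exists_rightInverse_of_surjective (LinearMap.range_eq_top.2 hsurj)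
  have hsπ : ∀ x, ∃ c : ℂ, s (π x) = x + c • z := by
    intro x
    have hx : s (π x) - x ∈ LinearMap.ker π := by
      rw [LinearMap.mem_ker, map_sub, sub_eq_zero]
      exact LinearMap.congr_fun hs (π x)
    rw [hker, Submodule.mem_span_singleton] at hx
    obtain ⟨c, hc⟩ := hx
    exact ⟨c, by rw [hc]; abel⟩
  -- `f` does not see the choice of lifts along `π`, so the section `s` may be dropped.
  have key : ∀ x y, f (s (π x)) (s (π y)) = f x y := by
    intro x y
    obtain ⟨c, hc⟩ := hsπ x
    obtain ⟨d, hd⟩ := hsπ y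
    have hrx : f x z = 0 := LinearMap.congr_fun hr x
    simp [hc, hd, hl, hrx]
  refine ⟨f.compl₁₂ s s, ?_, ?_⟩
  · intro a b c
    obtain ⟨x, rfl⟩ := hsurj a
    obtain ⟨y, rfl⟩ := hsurj b
    obtain ⟨w, rfl⟩ := hsurj c
    simp only [LinearMap.compl₁₂_apply]
    rw [← hmul, ← hmul, key, key]
    exact hf x y w
  · ext x y
    exact key x y

lemma finrank_cocycles_le {A H : Type*} [NonUnitalRing A] [Module ℂ A] [NonUnitalRing H]
    [Module ℂ H] [FiniteDimensional ℂ A] [FiniteDimensional ℂ H] {z : A}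
    (hz : ∀ a : A, z * a = 0 ∧ a * z = 0) (π : A →ₗ[ℂ] H)
    (hmul : ∀ x y : A, π (x * y) = π x * π y)
    (hsurj : Function.Surjective π) (hker : LinearMap.ker π = ℂ ∙ z) :
    finrank ℂ (Cocycles A) ≤
      finrank ℂ (Cocycles H) + 2 * finrank ℂ (A ⧸ derivedIdeal A) := by
  have h₁ := finrank_map_add_finrank_inf_ker (partialEvals z) (Cocycles A)
  have h₂ := Submodule.finrank_mono (map_partialEvals_cocycles_le hz)
  have h₃ := (Submodule.finrank_mono (cocycles_inf_ker_le π hmul hsurj hker)).trans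
    (Submodule.finrank_map_le _ _)
  have h₄ : finrank ℂ ((derivedIdeal A).dualAnnihilator.prod (derivedIdeal A).dualAnnihilator :
      Submodule ℂ (Dual ℂ A × Dual ℂ A)) ≤ 2 * finrank ℂ (A ⧸ derivedIdeal A) := by
    rw [← Subspace.dual_finrank_eq (V := A ⧸ derivedIdeal A),
      (derivedIdeal A).dualQuotEquivDualAnnihilator.finrank_eq,
      two_mul, ← finrank_prod]
    have h := LinearMap.finrank_range_le
      ((derivedIdeal A).dualAnnihilator.subtype.prodMap (derivedIdeal A).dualAnnihilator.subtype)
    rwa [LinearMap.range_prodMap, Submodule.range_subtype] at h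
  omega

/-- Pulled-back coboundaries of `H` form a proper subspace of those of `A`, since `z` lies in both
`A'` and the kernel of `π`. -/
lemma finrank_coboundaries_lt {A H : Type*} [NonUnitalRing A] [Module ℂ A]
    [SMulCommClass ℂ A A] [IsScalarTower ℂ A A] [NonUnitalRing H] [Module ℂ H]
    [FiniteDimensional ℂ A] {z : A} (hz0 : z ≠ 0) (hzd : z ∈ derivedIdeal A)
    (π : A →ₗ[ℂ] H) (hmul : ∀ x y : A, π (x * y) = π x * π y)
    (hsurj : Function.Surjective π) (hπz : π z = 0) :
    finrank ℂ (Coboundaries H) < finrank ℂ (Coboundaries A) := by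
  rw [(Submodule.equivMapOfInjective _ (bilinPullback_injective π hsurj) _).finrank_eq]
  apply Submodule.finrank_lt_finrank_of_lt
  refine lt_of_le_of_ne ?_ ?_
  · rintro _ ⟨h, ⟨g, hg⟩, rfl⟩
    refine ⟨g ∘ₗ π, fun x y => ?_⟩
    change h (π x) (π y) = g (π (x * y))
    rw [hg, hmul]
  · intro heq
    obtain ⟨g, hgz⟩ : ∃ g : Dual ℂ A, g z ≠ 0 := by
      by_contra! hall
      exact hz0 ((Module.forall_dual_apply_eq_zero_iff ℂ z).1 hall)
    have hmem : (LinearMap.mul ℂ A).compr₂ g ∈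
        (Coboundaries H).map (bilinPullback π) := by
      rw [heq]
      exact ⟨g, fun _ _ => rfl⟩
    obtain ⟨h, ⟨g', hg'⟩, hh⟩ := hmem
    -- The functionals `g` and `g' ∘ π` agree on products, hence at `z`.
    have hle : derivedIdeal A ≤ LinearMap.ker (g - g' ∘ₗ π) := by
      refine Submodule.span_le.2 ?_
      rintro _ ⟨x, y, rfl⟩
      have h₁ : h (π x) (π y) = g (x * y) := LinearMap.congr_fun₂ hh x y
      change g (x * y) - g' (π (x * y)) = 0
      rw [hmul, ← hg', h₁, sub_self]
    have h₂ : g z - g' (π z) = 0 := hle hzd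
    rw [hπz, map_zero, sub_zero] at h₂
    exact hgz h₂

/-- If `A` is nilpotent and finite-dimensional and `Z` is a 1-dimensional ideal of `A`
contained in `Z(A) ∩ A'`, then `dim M(A) + 1 ≤ dim M(A/Z) + 2 dim(A/A')`.
Here the quotient `A/Z` is represented by any associative ℂ-algebra `H` together with a
surjective multiplicative linear map `π : A → H` with kernel `Z`. -/
theorem multDim_add_one_le (A H : Type*) [NonUnitalRing A] [Module ℂ A] [SMulCommClass ℂ A A] [IsScalarTower ℂ A A]
    [NonUnitalRing H] [Module ℂ H] [SMulCommClass ℂ H H] [IsScalarTower ℂ H H]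
    [FiniteDimensional ℂ A] (hnil : IsNilpotentAlgebra A)
    (Z : Submodule ℂ A) (hideal : IsIdealOf A Z)
    (hdimZ : Module.finrank ℂ ↥Z = 1) (hle : Z ≤ centerSub A ⊓ derivedIdeal A)
    (π : A →ₗ[ℂ] H) (hmul : ∀ x y : A, π (x * y) = π x * π y)
    (hsurj : Function.Surjective π) (hker : LinearMap.ker π = Z) :
    multDim A + 1 ≤ multDim H + 2 * Module.finrank ℂ (A ⧸ derivedIdeal A) := by
  have : FiniteDimensional ℂ H := Module.Finite.of_surjective π hsurj
  obtain ⟨⟨z, hzZ⟩, hz0, hspan⟩ := finrank_eq_one_iff'.1 hdimZ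
  have hZ : Z = ℂ ∙ z := by
    refine le_antisymm (fun w hw => ?_) ((Submodule.span_singleton_le_iff_mem z Z).2 hzZ)
    obtain ⟨c, hc⟩ := hspan ⟨w, hw⟩
    exact Submodule.mem_span_singleton.2 ⟨c, congrArg Subtype.val hc⟩
  have hz0' : z ≠ 0 := fun h => hz0 (Subtype.ext h)
  have hπz : π z = 0 := by
    rw [← LinearMap.mem_ker, hker]
    exact hzZ
  have h₁ := finrank_cocycles_le (hle hzZ).1 π hmul hsurj (hker.trans hZ)
  have h₂ := finrank_coboundaries_lt hz0' (hle hzZ).2 π hmul hsurj hπz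
  have h₃ := multDim_add_finrank_coboundaries A
  have h₄ := multDim_add_finrank_coboundaries H
  omega
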